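/- Let Γ be an infinite additive abelian group that is neither a torsion group nor torsion-free (Γ contains an element of infinite additive order and a nonzero element of finite additive order). Let T be a finite tree of diameter 4 with central vertex v_c (the unique vertex with dist(v_c, u) ≤ 2 for every vertex u). Then T is Γ-vertex magic if and only if one of the following holds: (i) every non-pendant vertex of T is a strong support vertex; (ii) v_c is a weak support vertex and every non-pendant vertex other than v_c is a strong support vertex; (iii) v_c is a neutral vertex and there exists g ∈ Γ, g ≠ 0, with ((deg(v_c) : ℤ) − 1) • g = 0. -/

import Mathlib

/-!
Whether a label sum over the pendant neighbours of a vertex can be prescribed depends only on their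
number: in a group with at least three elements, two or more nonzero labels can have any sum, while
a single one can have any nonzero sum. Hence a magic labeling amounts to a nonzero labeling `f` of
the non-pendant vertices, with magic constant `μ`, for which the sum of `f` over the non-pendant
neighbours of `x` is `μ` if `x` has no pendant neighbour, and is not `μ` if `x` has exactly one.

In a tree of radius 2 around `c`, every non-pendant vertex `x ≠ c` is a support vertex and has `c`
as its only non-pendant neighbour. The pendant vertices force the label `μ` on all support vertices,
so that `f` is determined by `μ` and `a = f c`, and what remains is a condition on `a` and `μ`: with
`m` the number of non-pendant neighbours of `c`, a neutral `c` needs `m • μ = μ`, a support vertex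
`c` needs `a = μ`, which rules out weak support vertices `x ≠ c`, and a weak support vertex `c` also
needs `m • μ ≠ μ`.
-/

open Finset

section PrescribedSums

variable {V Γ : Type*} [AddCommGroup Γ] {s : Finset V}

lemma exists_ne_zero_sum_eq_of_nontrivial (hΓ : 3 ≤ ENat.card Γ) (hs : s.Nontrivial) (t : Γ) :
    ∃ f : V → Γ, (∀ v, f v ≠ 0) ∧ ∑ v ∈ s, f v = t := by
  classical
  obtain ⟨a, ha, b, hb, hab⟩ := hs
  obtain ⟨g, hg, -⟩ := ENat.exists_ne_ne_of_three_le hΓ 0 0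
  -- With the label `g` off `{a, b}`, the labels of `a` and `b` have to add up to `r`.
  let r : Γ := t - ∑ _v ∈ (s \ {a}) \ {b}, g
  obtain ⟨x, hx, hxr⟩ := ENat.exists_ne_ne_of_three_le hΓ 0 r
  refine ⟨Function.update (Function.update (fun _ ↦ g) b (r - x)) a x, fun v ↦ ?_, ?_⟩
  · simp only [Function.update_apply]
    split_ifs
    exacts [hx, sub_ne_zero.mpr hxr.symm, hg]
  · have hb' : b ∈ s \ {a} := by simpa [hab.symm] using hb
    rw [sum_update_of_mem ha, sum_update_of_mem hb', add_left_comm, ← add_assoc, sub_add_cancel,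
      sub_add_cancel]

lemma exists_ne_zero_sum_eq_iff (hΓ : 3 ≤ ENat.card Γ) {t : Γ} :
    (∃ f : V → Γ, (∀ v, f v ≠ 0) ∧ ∑ v ∈ s, f v = t) ↔
      (s = ∅ → t = 0) ∧ (#s = 1 → t ≠ 0) := by
  constructor
  · rintro ⟨f, hf, rfl⟩
    refine ⟨by rintro rfl; simp, fun hs ↦ ?_⟩
    obtain ⟨a, rfl⟩ := card_eq_one.mp hs
    simpa using hf a
  · rintro ⟨h0, h1⟩
    obtain ⟨g, hg, -⟩ := ENat.exists_ne_ne_of_three_le hΓ 0 0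
    obtain rfl | hs := s.eq_empty_or_nonempty
    · exact ⟨fun _ ↦ g, fun _ ↦ hg, by simp [h0 rfl]⟩
    obtain ⟨a, rfl⟩ | hs := hs.exists_eq_singleton_or_nontrivial
    · exact ⟨fun _ ↦ t, fun _ ↦ h1 (card_singleton a), sum_singleton _ _⟩
    · exact exists_ne_zero_sum_eq_of_nontrivial hΓ hs t

end PrescribedSums

section Multiples

variable {Γ : Type*} [AddGroup Γ]

lemma natCast_sub_one_zsmul_eq_zero_iff {n : ℕ} {g : Γ} : ((n : ℤ) - 1) • g = 0 ↔ n • g = g := by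
  rw [sub_zsmul, one_zsmul, natCast_zsmul, ← sub_eq_add_neg, sub_eq_zero]

lemma exists_zsmul_ne_zero_of_exponent_eq_zero (hΓ : AddMonoid.exponent Γ = 0) {n : ℤ}
    (hn : n ≠ 0) : ∃ g : Γ, n • g ≠ 0 := by
  by_contra! h
  rw [← AddGroup.exponent_dvd_iff_forall_zsmul_eq_zero, hΓ] at h
  simp [hn] at h

lemma three_le_card_of_exponent_eq_zero (hΓ : AddMonoid.exponent Γ = 0) : 3 ≤ ENat.card Γ := by
  have : Infinite Γ := not_finite_iff_infinite.mp fun _ ↦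
    AddMonoid.exponent_ne_zero_of_finite hΓ
  simp

end Multiples

section PendantVertices

variable {V : Type*} {G : SimpleGraph V} [G.LocallyFinite] {u x y : V}

variable (G) in
/-- The graph `G` is `Γ`-vertex magic: some labeling of its vertices by nonzero elements of `Γ`
gives every open neighbourhood the same label sum, the magic constant. -/
def IsVertexMagic (Γ : Type*) [AddCommGroup Γ] : Prop :=
  ∃ (ℓ : V → Γ) (μ : Γ), (∀ w, ℓ w ≠ 0) ∧ ∀ w, ∑ x ∈ G.neighborFinset w, ℓ x = μ

variable (G) in
/-- A strong support vertex: it has two pendant neighbours. -/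
def IsStrongSupport (x : V) : Prop :=
  ∃ a b : V, a ≠ b ∧ G.Adj x a ∧ G.Adj x b ∧ G.degree a = 1 ∧ G.degree b = 1

variable (G) in
/-- A weak support vertex: it has exactly one pendant neighbour. -/
def IsWeakSupport (x : V) : Prop :=
  ∃! u : V, G.Adj x u ∧ G.degree u = 1

variable (G) in
/-- A neutral vertex: it is neither pendant nor adjacent to a pendant vertex. -/
def IsNeutral (x : V) : Prop :=
  G.degree x ≠ 1 ∧ ¬ ∃ u : V, G.Adj x u ∧ G.degree u = 1

variable (G) in
/-- The pendant neighbours of `x`, whose labels are the free part of a magic labeling. -/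
def pendantNeighbors (x : V) : Finset V := {u ∈ G.neighborFinset x | G.degree u = 1}

variable (G) in
/-- The non-pendant neighbours of `x`, whose labels are constrained by a magic labeling. -/
def nonpendantNeighbors (x : V) : Finset V := {u ∈ G.neighborFinset x | ¬ G.degree u = 1}

lemma mem_pendantNeighbors : u ∈ pendantNeighbors G x ↔ G.Adj x u ∧ G.degree u = 1 := by
  simp [pendantNeighbors]

lemma mem_nonpendantNeighbors : u ∈ nonpendantNeighbors G x ↔ G.Adj x u ∧ G.degree u ≠ 1 := by
  simp [nonpendantNeighbors]

lemma isStrongSupport_iff_one_lt_card : IsStrongSupport G x ↔ 1 < #(pendantNeighbors G x) := by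
  simp only [IsStrongSupport, one_lt_card, mem_pendantNeighbors]
  grind

lemma isWeakSupport_iff_card_eq_one : IsWeakSupport G x ↔ #(pendantNeighbors G x) = 1 := by
  simp only [IsWeakSupport, card_eq_one, singleton_iff_unique_mem, mem_pendantNeighbors]

lemma isNeutral_iff_eq_empty :
    IsNeutral G x ↔ G.degree x ≠ 1 ∧ pendantNeighbors G x = ∅ := by
  simp only [IsNeutral, eq_empty_iff_forall_notMem, mem_pendantNeighbors, not_exists]

variable (G) in
lemma card_pendantNeighbors_add_card_nonpendantNeighbors (x : V) :
    #(pendantNeighbors G x) + #(nonpendantNeighbors G x) = G.degree x :=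
  card_filter_add_card_filter_not _

variable (G) in
lemma sum_pendantNeighbors_add_sum_nonpendantNeighbors {Γ : Type*} [AddCommMonoid Γ] (ℓ : V → Γ)
    (x : V) :
    ∑ u ∈ pendantNeighbors G x, ℓ u + ∑ u ∈ nonpendantNeighbors G x, ℓ u =
      ∑ u ∈ G.neighborFinset x, ℓ u :=
  sum_filter_add_sum_filter_not _ _ _

lemma neighborFinset_eq_singleton_of_degree_eq_one (hu : G.degree u = 1) (hux : G.Adj u x) :
    G.neighborFinset u = {x} := by
  obtain ⟨y, hy⟩ := card_eq_one.mp hu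
  have hx : x ∈ G.neighborFinset u := by simpa using hux
  rw [hy, mem_singleton] at hx
  rw [hy, hx]

lemma eq_of_mem_pendantNeighbors (hx : u ∈ pendantNeighbors G x) (hy : u ∈ pendantNeighbors G y) :
    x = y := by
  rw [mem_pendantNeighbors] at hx hy
  exact (SimpleGraph.degree_eq_one_iff_existsUnique_adj.mp hx.2).unique hx.1.symm hy.1.symm

lemma pendantNeighbors_eq_empty_of_degree_eq_one (hu : G.degree u = 1) (hux : G.Adj u x)
    (hx : G.degree x ≠ 1) : pendantNeighbors G u = ∅ := by
  rw [pendantNeighbors, neighborFinset_eq_singleton_of_degree_eq_one hu hux, filter_singleton,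
    if_neg hx]

lemma nonpendantNeighbors_eq_singleton_of_degree_eq_one (hu : G.degree u = 1) (hux : G.Adj u x)
    (hx : G.degree x ≠ 1) : nonpendantNeighbors G u = {x} := by
  rw [nonpendantNeighbors, neighborFinset_eq_singleton_of_degree_eq_one hu hux, filter_singleton,
    if_pos hx]

variable (G) in
/-- The trace of a magic labeling with magic constant `μ` on the non-pendant vertices: the pendant
neighbours of each vertex can be labeled so that its weight becomes `μ`. The values of `f` at
pendant vertices are irrelevant. -/
def IsMagicTrace {Γ : Type*} [AddCommGroup Γ] (f : V → Γ) (μ : Γ) : Prop :=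
  (∀ x, f x ≠ 0) ∧ ∀ x, (pendantNeighbors G x = ∅ → ∑ u ∈ nonpendantNeighbors G x, f u = μ) ∧
    (#(pendantNeighbors G x) = 1 → ∑ u ∈ nonpendantNeighbors G x, f u ≠ μ)

variable {Γ : Type*} [AddCommGroup Γ] {f : V → Γ} {μ : Γ}

lemma IsMagicTrace.isVertexMagic (hΓ : 3 ≤ ENat.card Γ) (hf : IsMagicTrace G f μ) :
    IsVertexMagic G Γ := by
  obtain ⟨hf0, hfsum⟩ := hf
  have hpendant : ∀ x, ∃ h : V → Γ, (∀ v, h v ≠ 0) ∧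
      ∑ u ∈ pendantNeighbors G x, h u = μ - ∑ u ∈ nonpendantNeighbors G x, f u := by
    intro x
    rw [exists_ne_zero_sum_eq_iff hΓ, sub_eq_zero, sub_ne_zero]
    exact ⟨fun h ↦ ((hfsum x).1 h).symm, fun h ↦ ((hfsum x).2 h).symm⟩
  choose h h_ne_zero h_sum using hpendant
  have hsupport : ∀ u, ∃ s, ∀ x, u ∈ pendantNeighbors G x → s = x := fun u ↦ by
    by_cases hu : ∃ s, u ∈ pendantNeighbors G s
    · exact hu.imp fun s hs x hx ↦ eq_of_mem_pendantNeighbors hs hx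
    · exact ⟨u, fun x hx ↦ absurd ⟨x, hx⟩ hu⟩
  choose s hs using hsupport
  refine ⟨fun u ↦ if G.degree u = 1 then h (s u) u else f u, μ, fun u ↦ ?_, fun x ↦ ?_⟩
  · dsimp only
    split_ifs
    exacts [h_ne_zero _ u, hf0 u]
  · rw [← sum_pendantNeighbors_add_sum_nonpendantNeighbors, ← sub_add_cancel μ, ← h_sum x]
    congr 1 <;> refine sum_congr rfl fun u hu ↦ ?_
    · rw [if_pos (mem_pendantNeighbors.mp hu).2, hs u x hu]
    · exact if_neg (mem_nonpendantNeighbors.mp hu).2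

theorem isVertexMagic_iff_exists_isMagicTrace (hΓ : 3 ≤ ENat.card Γ) :
    IsVertexMagic G Γ ↔ ∃ (f : V → Γ) (μ : Γ), IsMagicTrace G f μ := by
  refine ⟨?_, fun ⟨f, μ, hf⟩ ↦ hf.isVertexMagic hΓ⟩
  rintro ⟨ℓ, μ, hℓ, hweight⟩
  refine ⟨ℓ, μ, hℓ, fun x ↦ ?_⟩
  have hpendant := (exists_ne_zero_sum_eq_iff (s := pendantNeighbors G x) hΓ).mp ⟨ℓ, hℓ, rfl⟩
  rw [← hweight x, ← sum_pendantNeighbors_add_sum_nonpendantNeighbors]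
  simpa using hpendant

lemma IsMagicTrace.apply_eq_of_pendantNeighbors_nonempty (hf : IsMagicTrace G f μ)
    (hx : G.degree x ≠ 1) (h : (pendantNeighbors G x).Nonempty) : f x = μ := by
  obtain ⟨u, hu⟩ := h
  obtain ⟨hxu, hu⟩ := mem_pendantNeighbors.mp hu
  have hweight := (hf.2 u).1 (pendantNeighbors_eq_empty_of_degree_eq_one hu hxu.symm hx)
  rwa [nonpendantNeighbors_eq_singleton_of_degree_eq_one hu hxu.symm hx, sum_singleton] at hweight

end PendantVertices

section Connected

variable {V : Type*} {G : SimpleGraph V} [G.LocallyFinite] {c x : V}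

lemma degree_ne_one_of_adj_of_adj {p q : V} (hpq : p ≠ q) (hp : G.Adj x p) (hq : G.Adj x q) :
    G.degree x ≠ 1 := fun h ↦
  hpq ((SimpleGraph.degree_eq_one_iff_existsUnique_adj.mp h).unique hp hq)

lemma exists_adj_degree_ne_one (hG : G.Connected) (hc : G.degree c ≠ 1) (hx : x ≠ c) :
    ∃ y, G.Adj x y ∧ G.degree y ≠ 1 := by
  obtain ⟨p, hp, -⟩ := hG.exists_path_of_dist x c
  match p with
  | .nil => exact absurd rfl hx
  | .cons hxy .nil => exact ⟨c, hxy, hc⟩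
  | .cons (v := y) hxy (.cons (v := z) hyz p) =>
    refine ⟨y, hxy, degree_ne_one_of_adj_of_adj ?_ hxy.symm hyz⟩
    rintro rfl
    simp at hp

lemma exists_mem_nonpendantNeighbors_adj_of_dist_eq_two (hG : G.Connected) (hx : G.dist c x = 2) :
    ∃ y ∈ nonpendantNeighbors G c, G.Adj y x := by
  obtain ⟨p, hp⟩ := hG.exists_walk_length_eq_dist c x
  rw [hx] at hp
  match p, hp with
  | .cons (v := y) hcy (.cons hyx .nil), _ =>
    refine ⟨y, mem_nonpendantNeighbors.mpr ⟨hcy, degree_ne_one_of_adj_of_adj ?_ hcy.symm hyx⟩, hyx⟩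
    rintro rfl
    simp at hx

lemma one_lt_card_nonpendantNeighbors_of_dist_eq_four (hG : G.Connected)
    (hdist : ∀ u, G.dist c u ≤ 2) {a b : V} (hab : G.dist a b = 4) :
    1 < #(nonpendantNeighbors G c) := by
  have hacb := hG.dist_triangle (u := a) (v := c) (w := b)
  rw [hab, G.dist_comm (u := a)] at hacb
  have ha := hdist a
  have hb := hdist b
  obtain ⟨p, hp, hpa⟩ := exists_mem_nonpendantNeighbors_adj_of_dist_eq_two hG
    (show G.dist c a = 2 by omega)
  obtain ⟨q, hq, hqb⟩ := exists_mem_nonpendantNeighbors_adj_of_dist_eq_two hG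
    (show G.dist c b = 2 by omega)
  refine one_lt_card.mpr ⟨p, hp, q, hq, ?_⟩
  rintro rfl
  have hapb := hG.dist_triangle (u := a) (v := p) (w := b)
  rw [SimpleGraph.dist_eq_one_iff_adj.mpr hpa.symm, SimpleGraph.dist_eq_one_iff_adj.mpr hqb] at hapb
  omega

end Connected

section Trees

variable {V : Type*} {T : SimpleGraph V} {c x : V}

/-- The only neighbour of `x` is the previous vertex on the path from `c`. -/
lemma degree_eq_one_of_forall_adj_dist_le [Fintype (T.neighborSet x)] (hT : T.IsTree) (hx : x ≠ c)
    (hdist : ∀ y, T.Adj x y → T.dist c y ≤ T.dist c x) : T.degree x = 1 := by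
  obtain ⟨p, hp, hplen⟩ := hT.connected.exists_path_of_dist c x
  have hnil : ¬ p.Nil := SimpleGraph.Walk.not_nil_of_ne hx.symm
  rw [SimpleGraph.degree_eq_one_iff_existsUnique_adj]
  refine ⟨p.penultimate, (p.adj_penultimate hnil).symm, fun y hxy ↦ ?_⟩
  refine hT.isAcyclic.eq_penultimate_of_adj_end hp hxy (by_contra fun hy ↦ ?_)
  obtain ⟨q, hq, hqlen⟩ := hT.connected.exists_path_of_dist c y
  have hx_mem : x ∈ q.support :=
    hT.isAcyclic.mem_support_of_ne_mem_support_of_adj_of_isPath hq hp hxy.symm hy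
  have hlen := congrArg SimpleGraph.Walk.length (hT.isAcyclic.path_concat hp hq hxy hx_mem)
  rw [SimpleGraph.Walk.length_concat] at hlen
  have := hdist y hxy
  omega

variable [T.LocallyFinite]

section RadiusTwo

variable (hT : T.IsTree) (hdist : ∀ u, T.dist c u ≤ 2)

include hT hdist

lemma adj_of_degree_ne_one_of_dist_le_two (hx : x ≠ c) (hd : T.degree x ≠ 1) : T.Adj c x := by
  by_contra hadj
  have := hT.connected.one_lt_dist_of_ne_of_not_adj hx.symm hadj
  exact hd (degree_eq_one_of_forall_adj_dist_le hT hx fun y _ ↦ (hdist y).trans this)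

lemma nonpendantNeighbors_eq_singleton_of_dist_le_two (hc : T.degree c ≠ 1) (hx : x ≠ c)
    (hd : T.degree x ≠ 1) : nonpendantNeighbors T x = {c} := by
  have hcx := adj_of_degree_ne_one_of_dist_le_two hT hdist hx hd
  refine eq_singleton_iff_unique_mem.mpr ⟨mem_nonpendantNeighbors.mpr ⟨hcx.symm, hc⟩, ?_⟩
  intro y hy
  obtain ⟨hxy, hy⟩ := mem_nonpendantNeighbors.mp hy
  by_contra hyc
  have hcy := adj_of_degree_ne_one_of_dist_le_two hT hdist hyc hy
  apply hT.dist_ne_of_adj c hxy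
  rw [SimpleGraph.dist_eq_one_iff_adj.mpr hcx, SimpleGraph.dist_eq_one_iff_adj.mpr hcy]

lemma pendantNeighbors_nonempty_of_dist_le_two (hc : T.degree c ≠ 1) (hx : x ≠ c)
    (hd : T.degree x ≠ 1) : (pendantNeighbors T x).Nonempty := by
  have hcard := card_pendantNeighbors_add_card_nonpendantNeighbors T x
  rw [nonpendantNeighbors_eq_singleton_of_dist_le_two hT hdist hc hx hd, card_singleton] at hcard
  rw [← card_pos]
  omega

variable {Γ : Type*} [AddCommGroup Γ] {f : V → Γ} {μ : Γ}

lemma isMagicTrace_iff_of_dist_le_two (hc : T.degree c ≠ 1) :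
    IsMagicTrace T f μ ↔ (∀ x, f x ≠ 0) ∧
      (∀ x, T.degree x ≠ 1 → (pendantNeighbors T x).Nonempty → f x = μ) ∧
      (∀ x, x ≠ c → T.degree x ≠ 1 → #(pendantNeighbors T x) = 1 → f c ≠ μ) ∧
      (pendantNeighbors T c = ∅ → #(nonpendantNeighbors T c) • μ = μ) ∧
      (#(pendantNeighbors T c) = 1 → #(nonpendantNeighbors T c) • μ ≠ μ) := by
  have hsingleton : ∀ x, x ≠ c → T.degree x ≠ 1 → ∑ u ∈ nonpendantNeighbors T x, f u = f c :=
    fun x hx hd ↦ by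
      rw [nonpendantNeighbors_eq_singleton_of_dist_le_two hT hdist hc hx hd, sum_singleton]
  have hcenter (hsupport : ∀ x, T.degree x ≠ 1 → (pendantNeighbors T x).Nonempty → f x = μ) :
      ∑ u ∈ nonpendantNeighbors T c, f u = #(nonpendantNeighbors T c) • μ := by
    refine sum_eq_card_nsmul fun u hu ↦ ?_
    obtain ⟨hcu, hu⟩ := mem_nonpendantNeighbors.mp hu
    exact hsupport u hu (pendantNeighbors_nonempty_of_dist_le_two hT hdist hc hcu.ne' hu)
  constructor
  · intro hf
    have hsupport : ∀ x, T.degree x ≠ 1 → (pendantNeighbors T x).Nonempty → f x = μ :=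
      fun x ↦ hf.apply_eq_of_pendantNeighbors_nonempty
    rw [← hcenter hsupport]
    exact ⟨hf.1, hsupport, fun x hx hd h ↦ hsingleton x hx hd ▸ (hf.2 x).2 h, hf.2 c⟩
  · rintro ⟨hf, hsupport, hnonpendant, hc_sum⟩
    rw [← hcenter hsupport] at hc_sum
    refine ⟨hf, fun x ↦ ?_⟩
    obtain rfl | hx := eq_or_ne x c
    · exact hc_sum
    by_cases hd : T.degree x = 1
    · obtain ⟨y, hxy, hy⟩ := exists_adj_degree_ne_one hT.connected hc hx
      have hyx : x ∈ pendantNeighbors T y := mem_pendantNeighbors.mpr ⟨hxy.symm, hd⟩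
      simp [pendantNeighbors_eq_empty_of_degree_eq_one hd hxy hy,
        nonpendantNeighbors_eq_singleton_of_degree_eq_one hd hxy hy, hsupport y hy ⟨x, hyx⟩]
    · rw [hsingleton x hx hd]
      have hne := pendantNeighbors_nonempty_of_dist_le_two hT hdist hc hx hd
      exact ⟨fun h ↦ absurd h hne.ne_empty, hnonpendant x hx hd⟩

theorem isVertexMagic_iff_of_neutral_center (hΓ : 3 ≤ ENat.card Γ)
    (hc : 1 < T.degree c) (hneutral : pendantNeighbors T c = ∅) :
    IsVertexMagic T Γ ↔ ∃ g : Γ, g ≠ 0 ∧ ((T.degree c : ℤ) - 1) • g = 0 := by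
  have hcard : #(nonpendantNeighbors T c) = T.degree c := by
    simpa [hneutral] using card_pendantNeighbors_add_card_nonpendantNeighbors T c
  simp only [isVertexMagic_iff_exists_isMagicTrace hΓ,
    isMagicTrace_iff_of_dist_le_two hT hdist hc.ne', natCast_sub_one_zsmul_eq_zero_iff, ← hcard]
  constructor
  · rintro ⟨f, μ, hf, hsupport, -, hμ, -⟩
    refine ⟨μ, ?_, hμ hneutral⟩
    obtain ⟨x, hx⟩ : (nonpendantNeighbors T c).Nonempty := card_pos.mp (by omega)
    obtain ⟨hcx, hx⟩ := mem_nonpendantNeighbors.mp hx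
    rw [← hsupport x hx (pendantNeighbors_nonempty_of_dist_le_two hT hdist hc.ne' hcx.ne' hx)]
    exact hf x
  · rintro ⟨g, hg, hgc⟩
    classical
    obtain ⟨a, ha, hag⟩ := ENat.exists_ne_ne_of_three_le hΓ 0 g
    refine ⟨Function.update (fun _ ↦ g) c a, g, fun x ↦ ?_, fun x _ hx ↦ ?_, ?_, fun _ ↦ hgc, ?_⟩
    · rw [Function.update_apply]
      split_ifs
      exacts [ha, hg]
    · refine Function.update_of_ne ?_ _ _
      rintro rfl
      exact hx.ne_empty hneutral
    · simp [hag]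
    · simp [hneutral]

theorem isVertexMagic_iff_of_support_center (hΓ : 3 ≤ ENat.card Γ)
    (hc : T.degree c ≠ 1) (hsupp : (pendantNeighbors T c).Nonempty) :
    IsVertexMagic T Γ ↔ (∀ x, x ≠ c → T.degree x ≠ 1 → IsStrongSupport T x) ∧
      (IsWeakSupport T c → ∃ g : Γ, ((T.degree c : ℤ) - 2) • g ≠ 0) := by
  have hweak (g : Γ) (h : #(pendantNeighbors T c) = 1) :
      ((T.degree c : ℤ) - 2) • g ≠ 0 ↔ #(nonpendantNeighbors T c) • g ≠ g := by
    have hcard := card_pendantNeighbors_add_card_nonpendantNeighbors T c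
    rw [← natCast_sub_one_zsmul_eq_zero_iff.ne]
    congr! 2
    omega
  simp only [isVertexMagic_iff_exists_isMagicTrace hΓ, isMagicTrace_iff_of_dist_le_two hT hdist hc,
    isStrongSupport_iff_one_lt_card, isWeakSupport_iff_card_eq_one]
  constructor
  · rintro ⟨f, μ, -, hsupport, hstrong, -, hμ⟩
    refine ⟨fun x hx hd ↦ ?_, fun h ↦ ⟨μ, (hweak μ h).mpr (hμ h)⟩⟩
    have hpos := (pendantNeighbors_nonempty_of_dist_le_two hT hdist hc hx hd).card_pos
    have hne_one : #(pendantNeighbors T x) ≠ 1 := fun h ↦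
      hstrong x hx hd h (hsupport c hc hsupp)
    omega
  · rintro ⟨hstrong, hg⟩
    obtain ⟨g, hg0, hgc⟩ : ∃ g : Γ, g ≠ 0 ∧
        (#(pendantNeighbors T c) = 1 → #(nonpendantNeighbors T c) • g ≠ g) := by
      by_cases h : #(pendantNeighbors T c) = 1
      · obtain ⟨g, hg⟩ := hg h
        exact ⟨g, right_ne_zero_of_smul hg, fun _ ↦ (hweak g h).mp hg⟩
      · obtain ⟨g, hg, -⟩ := ENat.exists_ne_ne_of_three_le hΓ 0 0
        exact ⟨g, hg, fun h' ↦ absurd h' h⟩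
    exact ⟨fun _ ↦ g, g, fun _ ↦ hg0, fun _ _ _ ↦ rfl,
      fun x hx hd h ↦ absurd h (hstrong x hx hd).ne', fun h ↦ absurd h hsupp.ne_empty, hgc⟩

end RadiusTwo

theorem stmt_15_general {Γ : Type*} [AddCommGroup Γ] (hΓ : AddMonoid.exponent Γ = 0) (hT : T.IsTree)
    (hdiam : ∃ a b : V, T.dist a b = 4) (hdist : ∀ u, T.dist c u ≤ 2) :
    IsVertexMagic T Γ ↔
      (∀ x, T.degree x ≠ 1 → IsStrongSupport T x) ∨
      (IsWeakSupport T c ∧ ∀ x, x ≠ c → T.degree x ≠ 1 → IsStrongSupport T x) ∨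
      (IsNeutral T c ∧ ∃ g : Γ, g ≠ 0 ∧ ((T.degree c : ℤ) - 1) • g = 0) := by
  obtain ⟨a, b, hab⟩ := hdiam
  have hm := one_lt_card_nonpendantNeighbors_of_dist_eq_four hT.connected hdist hab
  have hcard := card_pendantNeighbors_add_card_nonpendantNeighbors T c
  have hc : 1 < T.degree c := by omega
  have hΓ3 := three_le_card_of_exponent_eq_zero hΓ
  simp only [isWeakSupport_iff_card_eq_one, isNeutral_iff_eq_empty]
  obtain hP | hP := (pendantNeighbors T c).eq_empty_or_nonempty
  · have hnot_strong : ¬ ∀ x, T.degree x ≠ 1 → IsStrongSupport T x := fun h ↦ by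
      simpa [isStrongSupport_iff_one_lt_card, hP] using h c hc.ne'
    simp [isVertexMagic_iff_of_neutral_center hT hdist hΓ3 hc hP, hnot_strong, hP, hc.ne']
  · have hexp : IsWeakSupport T c → ∃ g : Γ, ((T.degree c : ℤ) - 2) • g ≠ 0 := fun hweak ↦ by
      rw [isWeakSupport_iff_card_eq_one] at hweak
      exact exists_zsmul_ne_zero_of_exponent_eq_zero hΓ (by omega)
    rw [isVertexMagic_iff_of_support_center hT hdist hΓ3 hc.ne' hP, and_iff_left hexp]
    have hpos := hP.card_pos
    have hstrong_or_weak : IsStrongSupport T c ∨ #(pendantNeighbors T c) = 1 := by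
      rw [isStrongSupport_iff_one_lt_card]
      omega
    grind

end Trees

/-- Let `Γ` be an infinite abelian group which is neither torsion nor
torsion-free (it has an element of infinite order and a nonzero element of finite
order) and `T` a finite tree of diameter 4 with central vertex `vc`. Then `T` is
`Γ`-vertex magic iff (i) every non-pendant vertex is a strong support vertex; or
(ii) `vc` is a weak support vertex and every other non-pendant vertex is a strong
support vertex; or (iii) `vc` is neutral and there is `g ≠ 0` with
`((deg vc : ℤ) - 1) • g = 0`. -/
theorem stmt_15 {V Γ : Type*} [Fintype V] [DecidableEq V]
    [AddCommGroup Γ] [Infinite Γ]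
    (hmixed : (∃ g : Γ, ¬ IsOfFinAddOrder g) ∧ (∃ g : Γ, g ≠ 0 ∧ IsOfFinAddOrder g))
    (T : SimpleGraph V) [DecidableRel T.Adj] (hT : T.IsTree)
    (hdiam : (∀ a b : V, T.dist a b ≤ 4) ∧ ∃ a b : V, T.dist a b = 4)
    (vc : V) (hvc : ∀ u : V, T.dist vc u ≤ 2) :
    (∃ (ℓ : V → Γ) (μ : Γ), (∀ w, ℓ w ≠ 0) ∧
        ∀ w, ∑ x ∈ T.neighborFinset w, ℓ x = μ) ↔
      ((∀ x : V, T.degree x ≠ 1 →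
          ∃ a b : V, a ≠ b ∧ T.Adj x a ∧ T.Adj x b ∧ T.degree a = 1 ∧ T.degree b = 1) ∨
       ((∃! u : V, T.Adj vc u ∧ T.degree u = 1) ∧
        (∀ x : V, x ≠ vc → T.degree x ≠ 1 →
          ∃ a b : V, a ≠ b ∧ T.Adj x a ∧ T.Adj x b ∧ T.degree a = 1 ∧ T.degree b = 1)) ∨
       ((T.degree vc ≠ 1 ∧ ¬ ∃ u : V, T.Adj vc u ∧ T.degree u = 1) ∧
        (∃ g : Γ, g ≠ 0 ∧ ((T.degree vc : ℤ) - 1) • g = 0))) := by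
  obtain ⟨⟨g, hg⟩, -⟩ := hmixed
  exact stmt_15_general
    (AddMonoid.exponent_eq_zero_addOrder_zero (addOrderOf_eq_zero hg)) hT hdiam.2 hvc
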